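/- For every integer n ≥ 1, Σ_k k · D_{n,k} = (n−1)! · Σ_{m=1}^{n−1} (m² / m!) · d_{m−1}, where D_{n,k} is the number of derangements of {1,…,n} with exactly k descents and d_m is the number of derangements of {1,…,m} (with d_0 = 1). Equivalently, the expected number of descents of a uniformly random derangement of S_n equals ((n−1)!/d_n) · Σ_{m=1}^{n−1} (m²/m!) · d_{m−1}. -/

import Mathlib

open Finset

/-- The number of descents of a permutation of `Fin n`:
positions `i` with `i+1 < n` and `π(i) > π(i+1)`. -/
def descents {n : ℕ} (π : Equiv.Perm (Fin n)) : ℕ :=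
  (Finset.univ.filter fun i : Fin n =>
    ∃ h : (i : ℕ) + 1 < n, π ⟨(i : ℕ) + 1, h⟩ < π i).card

/-- The derangements of the symmetric group `S_n`. -/
def derangementSet (n : ℕ) : Finset (Equiv.Perm (Fin n)) :=
  Finset.univ.filter fun π => ∀ i, π i ≠ i

/-- `D_{n,k}`: the number of derangements of `{1,…,n}` with exactly `k` descents. -/
def derDesNat (n k : ℕ) : ℕ :=
  ((derangementSet n).filter fun π => descents π = k).card

lemma mem_ds {n : ℕ} (π : Equiv.Perm (Fin n)) : π ∈ derangementSet n ↔ ∀ i, π i ≠ i := by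
  simp [derangementSet]

lemma card_ds (n : ℕ) : (derangementSet n).card = numDerangements n := by
  rw [← card_derangements_fin_eq_numDerangements, Fintype.card_subtype]
  congr 1
  ext π
  rw [mem_ds, mem_filter]
  simp only [mem_univ, true_and]
  exact Iff.rfl

lemma both_card {n : ℕ} (i j : Fin n) (hij : i ≠ j) :
    ((derangementSet n).filter fun π => π i = j ∧ π j = i).card = numDerangements (n - 2) := by
  have h1 : Fintype.card {x : Fin n // x ≠ i ∧ x ≠ j} = n - 2 := by
    rw [Fintype.card_subtype]
    have : (univ.filter fun x : Fin n => x ≠ i ∧ x ≠ j) = ({i, j} : Finset (Fin n))ᶜ := by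
      ext x; simp
    rw [this, card_compl, card_pair hij, Fintype.card_fin]
  rw [← h1, ← card_derangements_eq_numDerangements,
    Fintype.card_congr (derangements.subtypeEquiv (fun x : Fin n => x ≠ i ∧ x ≠ j)),
    Fintype.card_subtype]
  apply card_nbij' (fun π => π * Equiv.swap i j) (fun π => π * Equiv.swap i j)
  · intro π hπ
    simp only [coe_filter, mem_ds, Set.mem_ofPred_eq, mem_univ, true_and] at hπ ⊢
    obtain ⟨hd, h1, h2⟩ := hπ
    intro a
    rw [Function.mem_fixedPoints, Function.IsFixedPt, Equiv.Perm.mul_apply]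
    by_cases hai : a = i
    · subst hai; simp [h2]
    by_cases haj : a = j
    · subst haj; simp [h1]
    rw [Equiv.swap_apply_of_ne_of_ne hai haj]
    simp [hai, haj, hd a]
  · intro π hπ
    simp only [coe_filter, mem_ds, Set.mem_ofPred_eq, mem_univ, true_and, Function.mem_fixedPoints,
      Function.IsFixedPt] at hπ ⊢
    have g1 := (hπ i).1 (by simp)
    have h2 := (hπ j).1 (by simp)
    refine ⟨fun a => ?_, by simp [h2], by simp [g1]⟩
    rw [Equiv.Perm.mul_apply]
    by_cases hai : a = i
    · subst hai; simp [h2, hij.symm]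
    by_cases haj : a = j
    · subst haj; simp [g1, hij]
    rw [Equiv.swap_apply_of_ne_of_ne hai haj]
    intro h
    exact (hπ a).2 h ⟨hai, haj⟩
  · intro π _; simp [mul_assoc]
  · intro π _; simp [mul_assoc]

/-- the involution -/
def flipAt {n : ℕ} (i j : Fin n) (π : Equiv.Perm (Fin n)) : Equiv.Perm (Fin n) :=
  if π i = j ∨ π j = i then Equiv.swap i j * π * Equiv.swap i j else π * Equiv.swap i j

lemma flipAt_flipAt {n : ℕ} (i j : Fin n) (π : Equiv.Perm (Fin n)) (hd : ∀ a, π a ≠ a) :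
    flipAt i j (flipAt i j π) = π := by
  have hi := hd i
  have hj := hd j
  by_cases h : π i = j ∨ π j = i
  · have h' : (Equiv.swap i j * π * Equiv.swap i j) i = j ∨
        (Equiv.swap i j * π * Equiv.swap i j) j = i := by
      rcases h with h | h
      · right; simp [h]
      · left; simp [h]
    simp only [flipAt, if_pos h, if_pos h']
    ext x; simp
  · have h' : ¬ ((π * Equiv.swap i j) i = j ∨ (π * Equiv.swap i j) j = i) := by
      simp [hi, hj]
    simp only [flipAt, if_neg h, if_neg h']
    ext x; simp

lemma flipAt_der {n : ℕ} (i j : Fin n) (π : Equiv.Perm (Fin n)) (hd : ∀ a, π a ≠ a) :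
    ∀ a, flipAt i j π a ≠ a := by
  intro a
  unfold flipAt
  split_ifs with h
  · intro h2
    apply hd (Equiv.swap i j a)
    rw [Equiv.Perm.mul_apply, Equiv.Perm.mul_apply] at h2
    exact (Equiv.swap_apply_eq_iff.1 h2)
  · push Not at h
    rw [Equiv.Perm.mul_apply]
    by_cases hai : a = i
    · subst hai; simp [h.2]
    by_cases haj : a = j
    · subst haj; simp [h.1]
    rw [Equiv.swap_apply_of_ne_of_ne hai haj]
    exact hd a

lemma flipAt_lt {n : ℕ} (i j : Fin n) (hij : (j : ℕ) = i + 1) (π : Equiv.Perm (Fin n))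
    (hd : ∀ a, π a ≠ a) (hb : ¬ (π i = j ∧ π j = i)) :
    (flipAt i j π j < flipAt i j π i ↔ π i < π j) := by
  have hi := hd i
  have hj := hd j
  have hne : i ≠ j := by intro h; rw [h] at hij; omega
  unfold flipAt
  split_ifs with h
  · simp only [Equiv.Perm.mul_apply, Equiv.swap_apply_left, Equiv.swap_apply_right]
    rcases h with h | h
    · have h3 : π j ≠ i := fun h' => hb ⟨h, h'⟩
      rw [h, Equiv.swap_apply_right, Equiv.swap_apply_of_ne_of_ne h3 hj]
      simp only [Fin.lt_def, ne_eq, Fin.ext_iff] at *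
      omega
    · have h3 : π i ≠ j := fun h' => hb ⟨h', h⟩
      rw [h, Equiv.swap_apply_left, Equiv.swap_apply_of_ne_of_ne hi h3]
      simp only [Fin.lt_def, ne_eq, Fin.ext_iff] at *
      omega
  · simp

lemma flipAt_both {n : ℕ} (i j : Fin n) (hne : i ≠ j) (π : Equiv.Perm (Fin n))
    (hd : ∀ a, π a ≠ a) (hb : ¬ (π i = j ∧ π j = i)) :
    ¬ (flipAt i j π i = j ∧ flipAt i j π j = i) := by
  rintro ⟨h1, h2⟩
  apply hb
  have h := flipAt_flipAt i j π hd
  rw [← h]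
  generalize flipAt i j π = σ at *
  simp [flipAt, h1, h2]

lemma two_mul_des {n : ℕ} (i j : Fin n) (hij : (j : ℕ) = i + 1) :
    2 * ((derangementSet n).filter fun π => π j < π i).card
      = numDerangements n + numDerangements (n - 2) := by
  have hne : i ≠ j := by intro h; rw [h] at hij; omega
  have e1 := card_filter_add_card_filter_not (s := derangementSet n) (fun π => π j < π i)
  have e2 := card_filter_add_card_filter_not
    (s := (derangementSet n).filter fun π => π j < π i) (fun π => π i = j ∧ π j = i)
  have e3 : (((derangementSet n).filter fun π => π j < π i).filter
      fun π => π i = j ∧ π j = i).card = numDerangements (n - 2) := by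
    rw [← both_card i j hne, filter_filter]
    congr 1
    apply filter_congr
    intro π _
    constructor
    · exact fun h => h.2
    · intro h
      refine ⟨?_, h⟩
      rw [h.1, h.2, Fin.lt_def]; omega
  have e4 : (((derangementSet n).filter fun π => π j < π i).filter
      fun π => ¬ (π i = j ∧ π j = i)).card =
      ((derangementSet n).filter fun π => ¬ π j < π i).card := by
    have key : ∀ π : Equiv.Perm (Fin n), ¬ π j < π i ↔ π i < π j := by
      intro π
      have : π i ≠ π j := fun h => hne (π.injective h)
      rw [not_lt]
      exact ⟨fun h => lt_of_le_of_ne h this, le_of_lt⟩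
    apply card_nbij' (flipAt i j) (flipAt i j)
    · intro π hπ
      simp only [coe_filter, mem_filter, mem_ds, Set.mem_ofPred_eq] at hπ ⊢
      obtain ⟨⟨hd, hl⟩, hb⟩ := hπ
      refine ⟨flipAt_der i j π hd, ?_⟩
      rw [flipAt_lt i j hij π hd hb]
      exact hl.not_gt
    · intro π hπ
      simp only [coe_filter, mem_filter, mem_ds, Set.mem_ofPred_eq] at hπ ⊢
      obtain ⟨hd, hl⟩ := hπ
      have hb : ¬ (π i = j ∧ π j = i) := by
        rintro ⟨h1, h2⟩
        apply hl
        rw [h1, h2, Fin.lt_def]; omega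
      refine ⟨⟨flipAt_der i j π hd, ?_⟩, flipAt_both i j hne π hd hb⟩
      rw [flipAt_lt i j hij π hd hb]
      exact (key π).1 hl
    · intro π hπ
      simp only [coe_filter, mem_filter, mem_ds, Set.mem_ofPred_eq] at hπ
      exact flipAt_flipAt i j π hπ.1.1
    · intro π hπ
      simp only [coe_filter, mem_ds, Set.mem_ofPred_eq] at hπ
      exact flipAt_flipAt i j π hπ.1
  rw [card_ds] at e1
  omega

lemma descents_eq {m : ℕ} (π : Equiv.Perm (Fin (m + 1))) :
    descents π = ∑ i : Fin m, if π i.succ < π i.castSucc then 1 else 0 := by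
  unfold descents
  rw [card_filter, Fin.sum_univ_castSucc]
  simp [Fin.succ]

lemma sum_k (m : ℕ) : 2 * ∑ k ∈ range (m + 1), k * derDesNat (m + 1) k
    = m * (numDerangements (m + 1) + numDerangements (m - 1)) := by
  have h1 : ∑ k ∈ range (m + 1), k * derDesNat (m + 1) k
      = ∑ π ∈ derangementSet (m + 1), descents π := by
    rw [← sum_fiberwise_of_maps_to (s := derangementSet (m + 1)) (t := range (m + 1))
      (g := descents)]
    · apply sum_congr rfl
      intro k _
      rw [sum_congr rfl (g := fun _ => k) (fun π hπ => (mem_filter.1 hπ).2), sum_const, smul_eq_mul,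
        mul_comm]
      rfl
    · intro π _
      rw [mem_range, descents_eq, ← card_filter]
      refine lt_of_le_of_lt (card_le_univ _) (by simp)
  rw [h1]
  simp_rw [descents_eq]
  rw [sum_comm, mul_sum]
  simp_rw [← card_filter]
  rw [sum_congr rfl (fun i _ => two_mul_des i.castSucc i.succ (by simp))]
  simp

lemma closed_form (m : ℕ) :
    ((m : ℝ) * (numDerangements (m + 1) + numDerangements (m - 1))) =
      2 * ((Nat.factorial m : ℝ) * ∑ k ∈ Finset.Icc 1 m,
          ((k : ℝ) ^ 2 / (Nat.factorial k : ℝ)) * (numDerangements (k - 1) : ℝ)) := by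
  induction m with
  | zero => simp
  | succ m ih =>
    rw [sum_Icc_succ_top (by omega), Nat.factorial_succ]
    have hf : (Nat.factorial m : ℝ) ≠ 0 := by positivity
    have hm : (m : ℝ) + 1 ≠ 0 := by positivity
    have e : (((m + 1) * Nat.factorial m : ℕ) : ℝ) *
        ((((m + 1 : ℕ) : ℝ) ^ 2 / (((m + 1) * Nat.factorial m : ℕ) : ℝ)) *
          (numDerangements (m + 1 - 1) : ℝ)) = ((m : ℝ) + 1) ^ 2 * numDerangements m := by
      push_cast
      field_simp
    rw [mul_add (((m + 1) * Nat.factorial m : ℕ) : ℝ), e, mul_add 2, Nat.cast_mul,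
      mul_assoc ((m + 1 : ℕ) : ℝ), mul_left_comm 2, ← ih]
    rcases m with _ | m
    · norm_num [numDerangements]
    · simp only [numDerangements_add_two, Nat.add_sub_cancel]
      push_cast
      ring

/-- `Σ_k k·D_{n,k} = (n-1)! · Σ_{m=1}^{n-1} (m²/m!)·d_{m-1}`. -/
theorem sum_descents_derangements_formula (n : ℕ) (hn : 1 ≤ n) :
    ((∑ k ∈ Finset.range n, k * derDesNat n k : ℕ) : ℝ) =
      (Nat.factorial (n - 1) : ℝ) *
        ∑ m ∈ Finset.Icc 1 (n - 1),
          ((m : ℝ) ^ 2 / (Nat.factorial m : ℝ)) * ((derangementSet (m - 1)).card : ℝ) := by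
  obtain ⟨m, rfl⟩ : ∃ m, n = m + 1 := ⟨n - 1, by omega⟩
  have h1 := congrArg (Nat.cast : ℕ → ℝ) (sum_k m)
  have h2 := closed_form m
  rw [Nat.cast_mul, Nat.cast_mul, Nat.cast_add, h2] at h1
  simp_rw [card_ds]
  rw [Nat.add_sub_cancel]
  rw [Nat.cast_ofNat] at h1
  linarith
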